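/- Assume 0<k0≤ρ0(R)≤k1 on [0,1] and that the material is homogeneous: Φ(R,v1,v2,v3)=Φ̃(v1,v2,v3) with Φ̃:(0,∞)³→[0,∞) symmetric. Let λ>0 and let r be a minimizer of I over A_λ. Suppose there exists λ̂>λ with the following property (which holds for any λ̂ below the critical boundary displacement of the material Φ̃): for every R₀∈(0,1] and every absolutely continuous s:[0,R₀]→[0,∞) with s'(R)>0 a.e., s(0)>0, s(R₀)=λ̂R₀ and ∫₀^{R₀} Φ̃(s'(R), s(R)/R, s(R)/R) R² dR < ∞, one has ∫₀^{R₀} Φ̃(s'(R), s(R)/R, s(R)/R) R² dR > (R₀³/3) Φ̃(λ̂,λ̂,λ̂). Then r(0)=0. -/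

import Mathlib

open MeasureTheory Real Set Filter

/-- `M_R = 4π ∫₀^R ρ0(u) u² du`. -/
noncomputable def Mfun (ρ0 : ℝ → ℝ) (R : ℝ) : ℝ := 4 * π * ∫ u in (0:ℝ)..R, ρ0 u * u ^ 2

/-- Mechanical energy for a homogeneous stored energy `Φ̃`. -/
noncomputable def Imec (Φt : ℝ → ℝ → ℝ → ℝ) (r r' : ℝ → ℝ) : ℝ :=
  ∫ R in Ioo (0:ℝ) 1, Φt (r' R) (r R / R) (r R / R) * R ^ 2

/-- Gravitational potential energy. -/
noncomputable def Ipot (ρ0 : ℝ → ℝ) (r : ℝ → ℝ) : ℝ :=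
  ∫ R in Ioo (0:ℝ) 1, ρ0 R * Mfun ρ0 R * (r R)⁻¹ * R ^ 2

/-- Total energy `I = I_mec − I_pot`. -/
noncomputable def Ifun (Φt : ℝ → ℝ → ℝ → ℝ) (ρ0 : ℝ → ℝ) (r r' : ℝ → ℝ) : ℝ :=
  Imec Φt r r' - Ipot ρ0 r

/-- The admissible set `A_λ` (homogeneous material). -/
def Adm (Φt : ℝ → ℝ → ℝ → ℝ) (lam : ℝ) (r r' : ℝ → ℝ) : Prop :=
  IntervalIntegrable r' volume 0 1 ∧
  (∀ x ∈ Icc (0:ℝ) 1, r x = r 0 + ∫ t in (0:ℝ)..x, r' t) ∧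
  (∀ᵐ R ∂volume.restrict (Ioo (0:ℝ) 1), 0 < r' R) ∧
  r 1 = lam ∧ 0 ≤ r 0 ∧
  IntegrableOn (fun R => Φt (r' R) (r R / R) (r R / R) * R ^ 2) (Ioo (0:ℝ) 1)

theorem stmt11 (ρ0 : ℝ → ℝ) (k0 k1 : ℝ) (hk0 : 0 < k0) (hρmeas : Measurable ρ0)
    (hρ : ∀ R ∈ Icc (0:ℝ) 1, k0 ≤ ρ0 R ∧ ρ0 R ≤ k1)
    (Φt : ℝ → ℝ → ℝ → ℝ)
    (hΦt0 : ∀ v1 ∈ Ioi (0:ℝ), ∀ v2 ∈ Ioi (0:ℝ), ∀ v3 ∈ Ioi (0:ℝ), 0 ≤ Φt v1 v2 v3)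
    (hΦtsym : ∀ v1 ∈ Ioi (0:ℝ), ∀ v2 ∈ Ioi (0:ℝ), ∀ v3 ∈ Ioi (0:ℝ),
      Φt v1 v2 v3 = Φt v2 v1 v3 ∧ Φt v1 v2 v3 = Φt v1 v3 v2)
    (lam : ℝ) (hlam : 0 < lam)
    (r r' : ℝ → ℝ) (hadm : Adm Φt lam r r')
    (hmin : ∀ s s' : ℝ → ℝ, Adm Φt lam s s' → Ifun Φt ρ0 r r' ≤ Ifun Φt ρ0 s s')
    -- `λ̂ > λ` is subcritical: any cavitating deformation on `[0,R₀]` with boundary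
    -- displacement `λ̂ R₀` has strictly more mechanical energy than the homogeneous one
    (lamh : ℝ) (hlamh : lam < lamh)
    (hsub : ∀ R0 ∈ Ioc (0:ℝ) 1, ∀ s s' : ℝ → ℝ,
      IntervalIntegrable s' volume 0 R0 →
      (∀ x ∈ Icc (0:ℝ) R0, s x = s 0 + ∫ t in (0:ℝ)..x, s' t) →
      (∀ᵐ R ∂volume.restrict (Ioo (0:ℝ) R0), 0 < s' R) →
      0 < s 0 → s R0 = lamh * R0 →
      IntegrableOn (fun R => Φt (s' R) (s R / R) (s R / R) * R ^ 2) (Ioo (0:ℝ) R0) →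
      R0 ^ 3 / 3 * Φt lamh lamh lamh <
        ∫ R in Ioo (0:ℝ) R0, Φt (s' R) (s R / R) (s R / R) * R ^ 2) :
    r 0 = 0 := by
  classical
  obtain ⟨hint, hftc, hpos, hr1, hr0, hI⟩ := hadm
  by_contra hne
  have hr0' : 0 < r 0 := lt_of_le_of_ne hr0 (Ne.symm hne)
  have hlamh0 : 0 < lamh := hlam.trans hlamh
  have hposc : ∀ᵐ t ∂volume.restrict (Ioc (0:ℝ) 1), 0 < r' t := by
    rw [← Measure.restrict_congr_set (Ioo_ae_eq_Ioc (μ := volume) (a := (0:ℝ)) (b := 1))]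
    exact hpos
  have hrc : ContinuousOn r (Icc 0 1) := by
    have h1 : ContinuousOn (fun x => r 0 + ∫ t in (0:ℝ)..x, r' t) (Icc 0 1) := by
      have := intervalIntegral.continuousOn_primitive_interval'
        (b₁ := 0) (b₂ := 1) (a := 0) (f := r') (μ := volume) hint (by simp)
      rw [uIcc_of_le zero_le_one] at this
      exact continuousOn_const.add this
    exact h1.congr hftc
  have hrge : ∀ x ∈ Icc (0:ℝ) 1, r 0 ≤ r x := by
    intro x hx
    rw [hftc x hx]
    have : 0 ≤ ∫ t in (0:ℝ)..x, r' t := by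
      apply intervalIntegral.integral_nonneg_of_ae_restrict hx.1
      rw [← Measure.restrict_congr_set (Ioc_ae_eq_Icc (μ := volume) (a := (0:ℝ)) (b := x))]
      have := ae_restrict_of_ae_restrict_of_subset (Ioc_subset_Ioc_right hx.2) hposc
      filter_upwards [this] with t ht using ht.le
    linarith
  have hgc : ContinuousOn (fun x => r x - lamh * x) (Icc 0 1) :=
    hrc.sub (by fun_prop)
  obtain ⟨R0, hR0S, hR0min⟩ : ∃ x, IsLeast (Icc (0:ℝ) 1 ∩ (fun x => r x - lamh * x) ⁻¹' Iic 0) x := by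
    apply IsCompact.exists_isLeast
    · exact isCompact_Icc.of_isClosed_subset
        (hgc.preimage_isClosed_of_isClosed isClosed_Icc isClosed_Iic) inter_subset_left
    · exact ⟨1, by simp, by simp [hr1]; linarith⟩
  have hR00 : 0 < R0 := by
    rcases hR0S.1.1.eq_or_lt with h | h
    · exfalso
      have := hR0S.2
      rw [← h] at this
      simp at this
      linarith
    · exact h
  have hR01 : R0 ≤ 1 := hR0S.1.2
  have hlt : ∀ x, 0 ≤ x → x < R0 → lamh * x < r x := by
    intro x h0 hx
    by_contra hc
    have := hR0min (a := x) ⟨⟨h0, by linarith⟩, by simp; linarith⟩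
    linarith
  have heq : r R0 = lamh * R0 := by
    have h2 : (0:ℝ) ∈ (fun x => r x - lamh * x) '' Icc 0 R0 := by
      apply intermediate_value_Icc' hR00.le (hgc.mono (Icc_subset_Icc_right hR01))
      refine ⟨hR0S.2, ?_⟩
      simp; exact hr0
    obtain ⟨c, hc, hc0⟩ := h2
    have hcR : R0 ≤ c := hR0min ⟨⟨hc.1, hc.2.trans hR01⟩, by
      simp only [mem_preimage, mem_Iic]; exact hc0.le⟩
    have : c = R0 := le_antisymm hc.2 hcR
    subst this
    simp at hc0
    linarith
  have hR0lt : R0 < 1 := by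
    rcases hR01.eq_or_lt with h | h
    · rw [h, hr1] at heq; linarith
    · exact h
  have hsubI : Ioo (0:ℝ) R0 ⊆ Ioo 0 1 := Ioo_subset_Ioo_right hR01
  have hsubu : uIcc (0:ℝ) R0 ⊆ uIcc 0 1 := by
    rw [uIcc_of_le hR00.le, uIcc_of_le zero_le_one]; exact Icc_subset_Icc_right hR01
  have key := hsub R0 ⟨hR00, hR01⟩ r r' (hint.mono_set hsubu)
    (fun x hx => hftc x ⟨hx.1, hx.2.trans hR01⟩)
    (ae_restrict_of_ae_restrict_of_subset hsubI hpos) hr0' heq (hI.mono_set hsubI)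
  set s : ℝ → ℝ := fun R => if R ≤ R0 then lamh * R else r R with hs
  set s' : ℝ → ℝ := fun R => if R ≤ R0 then lamh else r' R with hs'
  have hunion : Ioo (0:ℝ) 1 = Ioc 0 R0 ∪ Ioo R0 1 := (Ioc_union_Ioo_eq_Ioo hR00.le hR0lt).symm
  have hdisj : Disjoint (Ioc (0:ℝ) R0) (Ioo R0 1) := by
    rw [Set.disjoint_left]; intro x hx hy; exact absurd hx.2 (not_le.2 hy.1)
  -- the new integrand on the two pieces
  have hA : EqOn (fun R => Φt (s' R) (s R / R) (s R / R) * R ^ 2)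
      (fun R => Φt lamh lamh lamh * R ^ 2) (Ioc 0 R0) := by
    intro x hx
    have hx0 : x ≠ 0 := hx.1.ne'
    simp [hs, hs', hx.2, hx0]
  have hB : EqOn (fun R => Φt (s' R) (s R / R) (s R / R) * R ^ 2)
      (fun R => Φt (r' R) (r R / R) (r R / R) * R ^ 2) (Ioo R0 1) := by
    intro x hx
    simp [hs, hs', not_le.2 hx.1]
  have hsqint : IntegrableOn (fun R : ℝ => Φt lamh lamh lamh * R ^ 2) (Ioc 0 R0) :=
    (Continuous.integrableOn_Icc (by fun_prop)).mono_set Ioc_subset_Icc_self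
  have hAint := hsqint.congr_fun hA.symm measurableSet_Ioc
  have hIB : IntegrableOn (fun R => Φt (r' R) (r R / R) (r R / R) * R ^ 2) (Ioo R0 1) :=
    hI.mono_set (Ioo_subset_Ioo_left hR00.le)
  have hIA : IntegrableOn (fun R => Φt (r' R) (r R / R) (r R / R) * R ^ 2) (Ioc 0 R0) :=
    hI.mono_set (by rw [hunion]; exact subset_union_left)
  have hBint := hIB.congr_fun hB.symm measurableSet_Ioo
  have hsd0 : IntervalIntegrable s' volume 0 R0 := by
    refine (intervalIntegrable_const (c := lamh)).congr ?_
    intro x hx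
    rw [uIoc_of_le hR00.le] at hx
    simp [hs', hx.2]
  have hrR : IntervalIntegrable r' volume R0 1 := hint.mono_set (by
    rw [uIcc_of_le hR01, uIcc_of_le zero_le_one]; exact Icc_subset_Icc_left hR00.le)
  have hsd1 : IntervalIntegrable s' volume R0 1 := by
    refine hrR.congr ?_
    intro x hx
    rw [uIoc_of_le hR01] at hx
    simp [hs', not_le.2 hx.1]
  have hint1 : ∀ x, 0 ≤ x → x ≤ R0 → ∫ t in (0:ℝ)..x, s' t = lamh * x := by
    intro x h0 hx
    rw [intervalIntegral.integral_congr_ae (g := fun _ => lamh)]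
    · simp [mul_comm]
    · refine Eventually.of_forall fun t ht => ?_
      rw [uIoc_of_le h0] at ht
      simp [hs', ht.2.trans hx]
  have hs0 : s 0 = 0 := by simp [hs, hR00.le]
  have hadms : Adm Φt lam s s' := by
    refine ⟨hsd0.trans hsd1, ?_, ?_, ?_, ?_, ?_⟩
    · intro x hx
      rw [hs0, zero_add]
      rcases le_or_gt x R0 with h | h
      · rw [hint1 x hx.1 h]; simp [hs, h]
      · have hmono : uIcc R0 x ⊆ uIcc R0 1 := by
          rw [uIcc_of_le h.le, uIcc_of_le hR01]; exact Icc_subset_Icc_right hx.2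
        have hmono0 : uIcc R0 x ⊆ uIcc 0 1 := by
          rw [uIcc_of_le h.le, uIcc_of_le zero_le_one]
          exact Icc_subset_Icc hR00.le hx.2
        rw [← intervalIntegral.integral_add_adjacent_intervals hsd0 (hsd1.mono_set hmono),
          hint1 R0 hR00.le le_rfl]
        have h3 : ∫ t in R0..x, s' t = ∫ t in R0..x, r' t := by
          apply intervalIntegral.integral_congr_ae
          refine Eventually.of_forall fun t ht => ?_
          rw [uIoc_of_le h.le] at ht
          simp [hs', not_le.2 ht.1]
        have h4 := intervalIntegral.integral_add_adjacent_intervals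
          (hint.mono_set hsubu) (hint.mono_set hmono0)
        have h5 := hftc x hx
        have h6 := hftc R0 ⟨hR00.le, hR01⟩
        have h7 : s x = r x := by simp [hs, not_le.2 h]
        rw [h3, h7]
        linarith
    · filter_upwards [hpos] with x hx
      simp only [hs']
      split_ifs
      · exact hlamh0
      · exact hx
    · simp [hs, not_le.2 hR0lt, hr1]
    · exact hs0.ge
    · rw [hunion]; exact hAint.union hBint
  have hmec : Imec Φt s s' < Imec Φt r r' := by
    unfold Imec
    rw [hunion, setIntegral_union hdisj measurableSet_Ioo hAint hBint,
      setIntegral_union hdisj measurableSet_Ioo hIA hIB,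
      setIntegral_congr_fun measurableSet_Ioo hB, setIntegral_congr_fun measurableSet_Ioc hA]
    have h8 : ∫ R in Ioc 0 R0, Φt lamh lamh lamh * R ^ 2 = R0 ^ 3 / 3 * Φt lamh lamh lamh := by
      rw [← intervalIntegral.integral_of_le hR00.le, intervalIntegral.integral_const_mul,
        integral_pow]
      norm_num
      ring
    rw [h8, integral_Ioc_eq_integral_Ioo]
    linarith
  -- potential energy
  have hρint : IntervalIntegrable (fun u => ρ0 u * u ^ 2) volume 0 1 := by
    rw [intervalIntegrable_iff_integrableOn_Ioc_of_le zero_le_one]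
    refine Measure.integrableOn_of_bounded (M := k1) (by simp) (by fun_prop) ?_
    filter_upwards [ae_restrict_mem measurableSet_Ioc] with x hx
    have h9 := hρ x ⟨hx.1.le, hx.2⟩
    have h10 : x ^ 2 ≤ 1 := pow_le_one₀ hx.1.le hx.2
    rw [Real.norm_eq_abs, abs_of_nonneg (mul_nonneg (by linarith [h9.1]) (sq_nonneg x))]
    nlinarith [sq_nonneg x]
  have hMc : ContinuousOn (Mfun ρ0) (Icc 0 1) := by
    have := intervalIntegral.continuousOn_primitive_interval'
        (b₁ := 0) (b₂ := 1) (a := 0) (μ := volume) hρint (by simp)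
    rw [uIcc_of_le zero_le_one] at this
    exact continuousOn_const.mul this
  have hM0 : ∀ x ∈ Icc (0:ℝ) 1, 0 ≤ Mfun ρ0 x := by
    intro x hx
    unfold Mfun
    have : 0 ≤ ∫ u in (0:ℝ)..x, ρ0 u * u ^ 2 := by
      apply intervalIntegral.integral_nonneg hx.1
      intro u hu
      have := (hρ u ⟨hu.1, hu.2.trans hx.2⟩).1
      have : 0 ≤ ρ0 u := by linarith
      positivity
    positivity
  obtain ⟨C, hC⟩ := isCompact_Icc.exists_bound_of_continuousOn hMc
  have hsc : ContinuousOn s (Icc 0 1) := by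
    have : ContinuousOn (fun x => 0 + ∫ t in (0:ℝ)..x, s' t) (Icc 0 1) := by
      have := intervalIntegral.continuousOn_primitive_interval'
        (b₁ := 0) (b₂ := 1) (a := 0) (μ := volume) hadms.1 (by simp)
      rw [uIcc_of_le zero_le_one] at this
      exact continuousOn_const.add this
    exact this.congr (fun x hx => by rw [hadms.2.1 x hx, hs0])
  have hspos : ∀ x ∈ Ioo (0:ℝ) 1, 0 < s x ∧ s x ≤ r x ∧ min lamh (r 0) * x ≤ s x := by
    intro x hx
    have hx' : x ∈ Icc (0:ℝ) 1 := ⟨hx.1.le, hx.2.le⟩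
    rcases le_or_gt x R0 with h | h
    · have h1 : s x = lamh * x := by simp [hs, h]
      rw [h1]
      refine ⟨mul_pos hlamh0 hx.1, ?_, mul_le_mul_of_nonneg_right (min_le_left _ _) hx.1.le⟩
      rcases h.eq_or_lt with h | h
      · rw [h, heq]
      · exact (hlt x hx.1.le h).le
    · have h1 : s x = r x := by simp [hs, not_le.2 h]
      rw [h1]
      have h2 := hrge x hx'
      refine ⟨by linarith, le_rfl, ?_⟩
      have h3 : min lamh (r 0) * x ≤ r 0 * x :=
        mul_le_mul_of_nonneg_right (min_le_right _ _) hx.1.le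
      have h4 : r 0 * x ≤ r 0 * 1 := mul_le_mul_of_nonneg_left hx.2.le hr0
      linarith
  have hm : 0 < min lamh (r 0) := lt_min hlamh0 hr0'
  have hpotint : IntegrableOn (fun R => ρ0 R * Mfun ρ0 R * (s R)⁻¹ * R ^ 2) (Ioo 0 1) := by
    have hMm : AEStronglyMeasurable (Mfun ρ0) (volume.restrict (Ioo (0:ℝ) 1)) :=
      (hMc.mono Ioo_subset_Icc_self).aestronglyMeasurable measurableSet_Ioo
    have hsm : AEStronglyMeasurable (fun x => (s x)⁻¹) (volume.restrict (Ioo (0:ℝ) 1)) :=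
      ((hsc.mono Ioo_subset_Icc_self).inv₀ (fun x hx => (hspos x hx).1.ne')).aestronglyMeasurable
        measurableSet_Ioo
    refine Integrable.of_bound ?_ (k1 * C * (min lamh (r 0))⁻¹) ?_
    · exact ((hρmeas.aestronglyMeasurable.mul hMm).mul hsm).mul (continuous_pow 2).aestronglyMeasurable
    · filter_upwards [ae_restrict_mem measurableSet_Ioo] with x hx
      have hx' : x ∈ Icc (0:ℝ) 1 := ⟨hx.1.le, hx.2.le⟩
      obtain ⟨p1, p2, p3⟩ := hspos x hx
      have q1 := hρ x hx'
      have q2 := hM0 x hx'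
      have q3 : Mfun ρ0 x ≤ C := (le_abs_self _).trans (hC x hx')
      have q0 : 0 ≤ ρ0 x := by linarith [q1.1]
      have q4 : (s x)⁻¹ * x ^ 2 ≤ (min lamh (r 0))⁻¹ := by
        have : (s x)⁻¹ ≤ (min lamh (r 0) * x)⁻¹ := by
          have := hx.1
          gcongr
        calc (s x)⁻¹ * x ^ 2 ≤ (min lamh (r 0) * x)⁻¹ * x ^ 2 := by gcongr
          _ = (min lamh (r 0))⁻¹ * x := by have := hx.1.ne'; field_simp
          _ ≤ (min lamh (r 0))⁻¹ * 1 := by have := hx.2.le; gcongr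
          _ = _ := mul_one _
      have q5 : 0 ≤ (s x)⁻¹ * x ^ 2 := by positivity
      rw [Real.norm_eq_abs, abs_of_nonneg (by positivity), mul_assoc]
      have q6 : 0 ≤ k1 := q0.trans q1.2
      have q7 : 0 ≤ C := q2.trans q3
      have q8 := q1.2
      gcongr
  have hpot : Ipot ρ0 r ≤ Ipot ρ0 s := by
    unfold Ipot
    apply integral_mono_of_nonneg _ hpotint
    · filter_upwards [ae_restrict_mem measurableSet_Ioo] with x hx
      have hx' : x ∈ Icc (0:ℝ) 1 := ⟨hx.1.le, hx.2.le⟩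
      obtain ⟨p1, p2, p3⟩ := hspos x hx
      have q0 : 0 ≤ ρ0 x := by linarith [(hρ x hx').1]
      have q2 := hM0 x hx'
      gcongr
    · filter_upwards [ae_restrict_mem measurableSet_Ioo] with x hx
      have hx' : x ∈ Icc (0:ℝ) 1 := ⟨hx.1.le, hx.2.le⟩
      obtain ⟨p1, p2, p3⟩ := hspos x hx
      have q0 : 0 ≤ ρ0 x := by linarith [(hρ x hx').1]
      have q2 := hM0 x hx'
      have q3 : 0 < r x := p1.trans_le p2
      simp only [Pi.zero_apply]
      positivity
  have hfin := hmin s s' hadms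
  unfold Ifun at hfin
  linarith
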